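/- Let G be a graph of order n. Then G is s-path-coverable if and only if its (n−s)-closure C_{n−s}(G) is s-path-coverable. -/

import Mathlib

open Finset

/-- Spectral radius (largest eigenvalue) of the adjacency matrix of `G`. -/
noncomputable def specRad {V : Type*} [Fintype V] [DecidableEq V] (G : SimpleGraph V) : ℝ :=
  letI : DecidableRel G.Adj := Classical.decRel _
  sSup (spectrum ℝ (G.adjMatrix ℝ))

/-- Degree of a vertex, via `Set.ncard` (no decidability needed). -/
noncomputable def deg {V : Type*} (G : SimpleGraph V) (v : V) : ℕ :=
  (G.neighborSet v).ncard

/-- One step of the `k`-closure: add one edge between nonadjacent vertices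
with degree sum at least `k`. -/
def ClosureStep {V : Type*} (k : ℕ) (G H : SimpleGraph V) : Prop :=
  ∃ u v : V, u ≠ v ∧ ¬ G.Adj u v ∧ k ≤ deg G u + deg G v ∧
    H = G ⊔ SimpleGraph.fromEdgeSet {s(u, v)}

/-- No pair of nonadjacent vertices has degree sum at least `k`. -/
def IsKClosed {V : Type*} (k : ℕ) (H : SimpleGraph V) : Prop :=
  ∀ u v : V, u ≠ v → ¬ H.Adj u v → deg H u + deg H v < k

/-- `H` is a `k`-closure of `G`. -/
def IsKClosure {V : Type*} (k : ℕ) (G H : SimpleGraph V) : Prop :=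
  Relation.ReflTransGen (ClosureStep k) G H ∧ IsKClosed k H

/-- `G` is `s`-connected: more than `s` vertices, and deleting fewer than `s`
vertices leaves a connected graph. -/
def SConnected {V : Type*} [Fintype V] (s : ℕ) (G : SimpleGraph V) : Prop :=
  s < Fintype.card V ∧
    ∀ S : Finset V, S.card < s → (G.induce ((↑S : Set V)ᶜ)).Connected

/-- `G` is `s`-edge-connected: at least two vertices, and deleting fewer than
`s` edges leaves a connected graph. -/
def SEdgeConnected {V : Type*} [Fintype V] (s : ℕ) (G : SimpleGraph V) : Prop :=
  2 ≤ Fintype.card V ∧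
    ∀ F : Finset (Sym2 V), ↑F ⊆ G.edgeSet → F.card < s →
      (G.deleteEdges ↑F).Connected

/-- `G` is `β`-deficient: some matching leaves at most `β` vertices unmatched. -/
def BetaDeficient {V : Type*} [Fintype V] (β : ℕ) (G : SimpleGraph V) : Prop :=
  ∃ M : G.Subgraph, M.IsMatching ∧ Fintype.card V ≤ M.verts.ncard + β

/-- `G` is `s`-path-coverable: the vertices are covered by at most `s`
vertex-disjoint paths. -/
def SPathCoverable {V : Type*} (s : ℕ) (G : SimpleGraph V) : Prop :=
  ∃ m : ℕ, m ≤ s ∧ ∃ (a b : Fin m → V) (p : ∀ i, G.Walk (a i) (b i)),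
    (∀ i, (p i).IsPath) ∧
    (∀ i j, i ≠ j → ∀ x, x ∈ (p i).support → x ∉ (p j).support) ∧
    (∀ x : V, ∃ i, x ∈ (p i).support)

/-- `G` is `s`-Hamiltonian: deleting any at most `s` vertices leaves a
Hamiltonian graph. -/
def SHamiltonian {V : Type*} [Fintype V] [DecidableEq V] (s : ℕ) (G : SimpleGraph V) : Prop :=
  ∀ X : Finset V, X.card ≤ s → (G.induce ((↑X : Set V)ᶜ)).IsHamiltonian

/-- `G` is `s`-edge-Hamiltonian: any collection of vertex-disjoint paths with
at most `s` edges altogether is contained in a Hamiltonian cycle. -/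
def SEdgeHamiltonian {V : Type*} [Fintype V] [DecidableEq V] (s : ℕ) (G : SimpleGraph V) : Prop :=
  ∀ (m : ℕ) (a b : Fin m → V) (p : ∀ i, G.Walk (a i) (b i)),
    (∀ i, (p i).IsPath) →
    (∀ i j, i ≠ j → ∀ x, x ∈ (p i).support → x ∉ (p j).support) →
    (∑ i, (p i).length) ≤ s →
    ∃ (c : V) (w : G.Walk c c), w.IsHamiltonianCycle ∧
      ∀ i, ∀ e ∈ (p i).edges, e ∈ w.edges

/-- `G` is semi-regular bipartite: all edges go between `X` and its complement,
vertices in `X` all have degree `dX`, vertices outside `X` all have degree `dY`. -/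
def IsSemiregularBipartite {V : Type*} (G : SimpleGraph V) : Prop :=
  ∃ (X : Set V) (dX dY : ℕ),
    (∀ u v, G.Adj u v → (u ∈ X ↔ v ∉ X)) ∧
    (∀ u ∈ X, deg G u = dX) ∧
    (∀ u ∉ X, deg G u = dY)

/-- `G ∈ EP_n`: `G = Ḡ₁ ∨ G₂` with `G₁` an `r`-regular graph of order `n-k+r`
and `G₂` a spanning subgraph of `K_{k-r}` (equivalently: outside a set `S` of
`k-r` vertices the induced graph is `(n-k-1)`-regular, and all pairs between
`S` and its complement are joined). -/
def MemEP {V : Type*} [Fintype V] (n k : ℕ) (G : SimpleGraph V) : Prop :=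
  ∃ (r : ℕ) (S : Finset V), r ≤ k ∧ S.card = k - r ∧
    (∀ a ∉ S, ∀ b ∈ S, G.Adj a b) ∧
    (∀ a ∉ S, ((G.neighborSet a) \ (↑S : Set V)).ncard = n - k - 1)

/-- `G ∈ EC_n`: `G = Ḡ₁ ∨ G₂` where `G₁ = (X,Y)` is semi-regular bipartite of
order `n-s+1+r`, with degrees `k-s+2` on `X` and `n-k-1` on `Y`, and `G₂` is an
arbitrary graph on `s-1-r ≥ 0` vertices. -/
def MemEC {V : Type*} [Fintype V] [DecidableEq V] (n k s : ℕ) (G : SimpleGraph V) : Prop :=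
  ∃ (r : ℕ) (X Y S : Finset V) (G₁ : SimpleGraph V),
    Disjoint X Y ∧ Disjoint X S ∧ Disjoint Y S ∧ X ∪ Y ∪ S = Finset.univ ∧
    ((S.card : ℤ) = (s : ℤ) - 1 - r) ∧
    ((X.card : ℤ) + Y.card = (n : ℤ) - s + 1 + r) ∧
    (∀ u v, G₁.Adj u v → (u ∈ X ∧ v ∈ Y) ∨ (u ∈ Y ∧ v ∈ X)) ∧
    (∀ u ∈ X, ((deg G₁ u : ℤ) = (k : ℤ) - s + 2)) ∧
    (∀ v ∈ Y, ((deg G₁ v : ℤ) = (n : ℤ) - k - 1)) ∧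
    (∀ a, a ∈ X ∪ Y → ∀ b ∈ S, G.Adj a b) ∧
    (∀ a ∈ X ∪ Y, ∀ b ∈ X ∪ Y, (G.Adj a b ↔ a ≠ b ∧ ¬ G₁.Adj a b))

/-- `G ∈ ES_n`: `G = Ḡ₁ ∨ G₂` where `G₁ = (X,Y)` is semi-regular bipartite of
order `n-s-1+r`, with degrees `k-s` on `X` and `n-k-1` on `Y`, and `G₂` is an
arbitrary graph on `s+1-r ≥ 0` vertices. -/
def MemES {V : Type*} [Fintype V] [DecidableEq V] (n k s : ℕ) (G : SimpleGraph V) : Prop :=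
  ∃ (r : ℕ) (X Y S : Finset V) (G₁ : SimpleGraph V),
    Disjoint X Y ∧ Disjoint X S ∧ Disjoint Y S ∧ X ∪ Y ∪ S = Finset.univ ∧
    ((S.card : ℤ) = (s : ℤ) + 1 - r) ∧
    ((X.card : ℤ) + Y.card = (n : ℤ) - s - 1 + r) ∧
    (∀ u v, G₁.Adj u v → (u ∈ X ∧ v ∈ Y) ∨ (u ∈ Y ∧ v ∈ X)) ∧
    (∀ u ∈ X, ((deg G₁ u : ℤ) = (k : ℤ) - s)) ∧
    (∀ v ∈ Y, ((deg G₁ v : ℤ) = (n : ℤ) - k - 1)) ∧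
    (∀ a, a ∈ X ∪ Y → ∀ b ∈ S, G.Adj a b) ∧
    (∀ a ∈ X ∪ Y, ∀ b ∈ X ∪ Y, (G.Adj a b ↔ a ≠ b ∧ ¬ G₁.Adj a b))

/-- `G = K_{k+1} + K_{n-k-1}`: the disjoint union of a clique on `k+1` vertices
and a clique on the remaining vertices. -/
def IsCliquePlusClique {V : Type*} [Fintype V] (k : ℕ) (G : SimpleGraph V) : Prop :=
  ∃ S : Finset V, S.card = k + 1 ∧
    (∀ a ∈ S, ∀ b ∈ S, a ≠ b → G.Adj a b) ∧
    (∀ a ∉ S, ∀ b ∉ S, a ≠ b → G.Adj a b) ∧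
    (∀ a ∈ S, ∀ b ∉ S, ¬ G.Adj a b)

namespace PathCov

open Classical in
/-- Cost of a consecutive pair: `1` for a nonadjacent pair. -/
noncomputable def c {V : Type*} (G : SimpleGraph V) (x y : V) : ℕ := if G.Adj x y then 0 else 1

/-- Number of nonadjacent consecutive pairs. -/
noncomputable def br {V : Type*} (G : SimpleGraph V) : List V → ℕ
  | [] => 0
  | [_] => 0
  | x :: y :: l => c G x y + br G (y :: l)

/-- linear arrangement with few breaks -/
def Good {V : Type*} (s : ℕ) (G : SimpleGraph V) : Prop :=
  ∃ L : List V, L.Nodup ∧ (∀ x, x ∈ L) ∧ br G L + 1 ≤ s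

lemma c_comm {V : Type*} (G : SimpleGraph V) (x y : V) : c G x y = c G y x := by
  unfold c; by_cases h : G.Adj x y
  · simp [h, h.symm]
  · simp only [h, if_false, if_neg (fun hh : G.Adj y x => h hh.symm)]

lemma c_le {V : Type*} (G : SimpleGraph V) (x y : V) : c G x y ≤ 1 := by
  unfold c; split_ifs <;> simp

lemma br_append {V : Type*} (G : SimpleGraph V) (X Y : List V) (a b : V)
    (ha : X.getLast? = some a) (hb : Y.head? = some b) :
    br G (X ++ Y) = br G X + c G a b + br G Y := by
  induction X with
  | nil => simp at ha
  | cons x X ih =>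
    cases X with
    | nil =>
      cases Y with
      | nil => simp at hb
      | cons y Y => simp at ha hb; subst ha hb; simp [br]
    | cons x' X =>
      have := ih (by simpa using ha)
      simp only [List.cons_append, br] at this ⊢
      omega

lemma br_reverse {V : Type*} (G : SimpleGraph V) (X : List V) : br G X.reverse = br G X := by
  induction X with
  | nil => rfl
  | cons x X ih =>
    cases X with
    | nil => rfl
    | cons y X =>
      rw [List.reverse_cons, br_append G _ [x] y x (by simp) (by simp), ih]
      simp [br, c_comm G y x]; omega

lemma exists_break {V : Type*} (G : SimpleGraph V) (L : List V) (h : 0 < br G L) :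
    ∃ X a b Y, L = X ++ a :: b :: Y ∧ c G a b = 1 := by
  induction L with
  | nil => simp [br] at h
  | cons x L ih =>
    cases L with
    | nil => simp [br] at h
    | cons y L =>
      by_cases hc : c G x y = 1
      · exact ⟨[], x, y, L, rfl, hc⟩
      · have := c_le G x y
        simp only [br] at h
        obtain ⟨X, a, b, Y, h1, h2⟩ := ih (by omega)
        exact ⟨x :: X, a, b, Y, by simp [h1], h2⟩

lemma split_eq {V : Type*} (G : SimpleGraph V) (X Y : List V) (a b : V) :
    br G (X ++ a :: b :: Y) = br G (X ++ [a]) + c G a b + br G (b :: Y) := by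
  have := br_append G (X ++ [a]) (b :: Y) a b (by simp) (by simp)
  simpa using this

lemma rotate {V : Type*} (G : SimpleGraph V) (s : ℕ) (hs : 1 ≤ s) (L : List V) (p q : V)
    (hp : L.head? = some p) (hq : L.getLast? = some q) (h : br G L + c G q p ≤ s) :
    ∃ L' : List V, L'.Perm L ∧ br G L' + 1 ≤ s := by
  by_cases h1 : br G L + 1 ≤ s
  · exact ⟨L, List.Perm.refl _, h1⟩
  obtain ⟨X, a, b, Y, rfl, hc⟩ := exists_break G L (by omega)
  refine ⟨(b :: Y) ++ (X ++ [a]), ?_, ?_⟩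
  · have := List.perm_append_comm (l₁ := b :: Y) (l₂ := X ++ [a])
    simpa using this
  · rw [br_append G (b :: Y) (X ++ [a]) q p]
    · rw [split_eq] at h h1; omega
    · simpa using hq
    · cases X <;> simpa using hp

open Classical in
lemma count_aux {V : Type*} (G : SimpleGraph V) (u v z : V) (l : List V) : ∀ p : V,
    (p :: l).getLast? = some z →
    (∃ X a b Y, p :: l = X ++ a :: b :: Y ∧ c G v b + c G u a ≤ c G a b) ∨
    br G (p :: l) + l.countP (fun x => G.Adj v x) + (p :: l).countP (fun x => G.Adj u x)
      ≤ l.length + (if G.Adj u z then 1 else 0) := by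
  induction l with
  | nil =>
    intro p hp
    simp at hp; subst hp
    right
    simp [br, List.countP_cons]
  | cons q l ih =>
    intro p hp
    by_cases hgood : c G v q + c G u p ≤ c G p q
    · exact Or.inl ⟨[], p, q, l, rfl, hgood⟩
    rcases ih q (by simpa using hp) with ⟨X, a, b, Y, h1, h2⟩ | h
    · exact Or.inl ⟨p :: X, a, b, Y, by simp [h1], h2⟩
    · right
      rw [List.countP_cons] at h
      simp only [br, List.countP_cons, List.length_cons]
      have e1 : (if decide (G.Adj v q) = true then 1 else 0) + c G v q = 1 := by
        unfold c; by_cases hh : G.Adj v q <;> simp [hh]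
      have e2 : (if decide (G.Adj u p) = true then 1 else 0) + c G u p = 1 := by
        unfold c; by_cases hh : G.Adj u p <;> simp [hh]
      omega

open Classical in
lemma deg_eq {V : Type*} (G : SimpleGraph V) (v : V) (L : List V) (hn : L.Nodup)
    (hL : ∀ x, x ∈ L) : deg G v = L.countP (fun x => G.Adj v x) := by
  rw [List.countP_eq_length_filter, ← List.toFinset_card_of_nodup (hn.filter _), deg,
    ← Set.ncard_coe_finset]
  congr 1
  ext x
  simp [hL]

lemma main_step {V : Type*} (G : SimpleGraph V) (s : ℕ) (hs : 1 ≤ s) (W : List V)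
    (hn : W.Nodup) (hW : ∀ x, x ∈ W) (u v : V) (hv : W.head? = some v)
    (hu : W.getLast? = some u) (hbr : br G W ≤ s)
    (hdeg : W.length - s ≤ deg G u + deg G v) : Good s G := by
  classical
  suffices ∃ L' : List V, L'.Perm W ∧ br G L' + 1 ≤ s by
    obtain ⟨L', h1, h2⟩ := this
    exact ⟨L', h1.nodup_iff.2 hn, fun x => h1.mem_iff.2 (hW x), h2⟩
  cases W with
  | nil => simp at hv
  | cons p l =>
    obtain rfl : p = v := by simpa using hv
    rcases count_aux G u p u l p hu with ⟨X, a, b, Y, h1, h2⟩ | h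
    · rw [h1] at hv hu hbr ⊢
      rw [split_eq] at hbr
      have hX : (X ++ [a]).head? = some p := by cases X <;> simpa using hv
      have hXr : (X ++ [a]).reverse.getLast? = some p := by
        rw [List.getLast?_reverse]; exact hX
      obtain ⟨L', hL, hb⟩ := rotate G s hs ((X ++ [a]).reverse ++ (b :: Y)) a u (by simp)
        (by
          rw [List.getLast?_append_of_ne_nil _ (by simp)]
          rwa [List.getLast?_append_of_ne_nil _ (by simp), List.getLast?_cons_cons] at hu) (by
          rw [br_append G _ (b :: Y) p b hXr (by simp), br_reverse]
          omega)
      refine ⟨L', hL.trans ?_, hb⟩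
      have := (List.reverse_perm (X ++ [a])).append_right (b :: Y)
      simpa using this
    · refine ⟨_, List.Perm.refl _, ?_⟩
      rw [deg_eq G u _ hn hW, deg_eq G p _ hn hW] at hdeg
      rw [List.countP_cons (l := l) (p := fun x => decide (G.Adj p x))] at hdeg
      simp at hdeg h
      omega

lemma br_cmp {V : Type*} (G H : SimpleGraph V) (L : List V) :
    br G L ≤ br H L ∨ ∃ X a b Y, L = X ++ a :: b :: Y ∧ H.Adj a b ∧ ¬ G.Adj a b := by
  induction L with
  | nil => simp [br]
  | cons x L ih =>
    cases L with
    | nil => simp [br]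
    | cons y L =>
      rcases ih with ih | ⟨X, a, b, Y, h1, h2⟩
      · by_cases h : H.Adj x y ∧ ¬ G.Adj x y
        · exact Or.inr ⟨[], x, y, L, rfl, h⟩
        · left
          have : c G x y ≤ c H x y := by
            unfold c; split_ifs <;> simp_all
          simp only [br]; omega
      · exact Or.inr ⟨x :: X, a, b, Y, by simp [h1], h2⟩

lemma good_step {V : Type*} [Fintype V] (G H : SimpleGraph V) (s : ℕ)
    (hst : ClosureStep (Fintype.card V - s) G H) (hH : Good s H) : Good s G := by
  classical
  obtain ⟨u, v, huv, hna, hdeg, rfl⟩ := hst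
  obtain ⟨L, hn, hL, hb⟩ := hH
  set H := G ⊔ SimpleGraph.fromEdgeSet {s(u, v)} with hHdef
  have key : ∀ a b, H.Adj a b → ¬ G.Adj a b → (a = u ∧ b = v) ∨ (a = v ∧ b = u) := by
    intro a b h1 h2
    simp [hHdef, h2] at h1
    tauto
  rcases br_cmp G H L with h | ⟨X, a, b, Y, rfl, h1, h2⟩
  · exact ⟨L, hn, hL, by omega⟩
  have hk := key a b h1 h2
  rw [split_eq] at hb
  have hlen : (X ++ a :: b :: Y).length = Fintype.card V := by
    rw [← List.toFinset_card_of_nodup hn, ← Finset.card_univ]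
    congr 1
    ext x; simp only [List.mem_toFinset, Finset.mem_univ, iff_true]; exact hL x
  have hn' : ((X ++ [a]) ++ (b :: Y)).Nodup := by simpa using hn
  have hdis := (List.nodup_append'.1 hn').2.2
  have hX : br G (X ++ [a]) ≤ br H (X ++ [a]) := by
    rcases br_cmp G H (X ++ [a]) with h | ⟨X', a', b', Y', h3, h4, h5⟩
    · exact h
    exfalso
    have hm : b ∈ X ++ [a] := by
      have := key a' b' h4 h5
      have h6 : a' ∈ X ++ [a] := by rw [h3]; simp
      have h7 : b' ∈ X ++ [a] := by rw [h3]; simp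
      grind
    exact hdis hm (by simp)
  have hY : br G (b :: Y) ≤ br H (b :: Y) := by
    rcases br_cmp G H (b :: Y) with h | ⟨X', a', b', Y', h3, h4, h5⟩
    · exact h
    exfalso
    have hm : a ∈ b :: Y := by
      have := key a' b' h4 h5
      have h6 : a' ∈ b :: Y := by rw [h3]; simp
      have h7 : b' ∈ b :: Y := by rw [h3]; simp
      grind
    exact hdis (a := a) (by simp) hm
  have hperm : ((b :: Y) ++ (X ++ [a])).Perm (X ++ a :: b :: Y) := by
    have := List.perm_append_comm (l₁ := b :: Y) (l₂ := X ++ [a])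
    simpa using this
  refine main_step G s (by omega) ((b :: Y) ++ (X ++ [a])) (hperm.nodup_iff.2 hn)
    (fun x => hperm.mem_iff.2 (hL x)) a b (by simp) (by
      rw [← List.append_assoc]; exact List.getLast?_concat) ?_ ?_
  · obtain ⟨z, hz⟩ : ∃ z, (b :: Y).getLast? = some z := ⟨_, List.getLast?_eq_some_getLast (by simp)⟩
    obtain ⟨w, hw⟩ : ∃ w, (X ++ [a]).head? = some w := ⟨_, List.head?_eq_some_head (by simp)⟩
    rw [br_append G _ _ z w hz hw]
    have := c_le G z w
    omega
  · rw [hperm.length_eq, hlen]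
    rcases hk with ⟨rfl, rfl⟩ | ⟨rfl, rfl⟩ <;> omega

lemma br_chain {V : Type*} (G : SimpleGraph V) (L : List V) (h : L.IsChain G.Adj) :
    br G L = 0 := by
  induction L with
  | nil => rfl
  | cons x L ih =>
    cases L with
    | nil => rfl
    | cons y L =>
      rw [List.isChain_cons_cons] at h
      simp [br, ih h.2, c, h.1]

lemma br_flatten {V : Type*} (G : SimpleGraph V) (LL : List (List V))
    (h : ∀ l ∈ LL, l ≠ [] ∧ l.IsChain G.Adj) : br G LL.flatten ≤ LL.length - 1 := by
  induction LL with
  | nil => simp [br]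
  | cons l LL ih =>
    have ih := ih (fun l hl => h l (by simp [hl]))
    obtain ⟨h1, h2⟩ := h l (by simp)
    cases LL with
    | nil => simp [br_chain G l h2]
    | cons l' LL =>
      have h3 := (h l' (by simp)).1
      have h4 : (l' :: LL).flatten ≠ [] := by simp [h3]
      rw [List.flatten_cons, br_append G _ _ _ _ (List.getLast?_eq_some_getLast h1)
        (List.head?_eq_some_head h4), br_chain G l h2]
      have := c_le G (l.getLast h1) ((l' :: LL).flatten.head h4)
      simp only [List.length_cons] at ih ⊢
      omega

lemma exists_split {V : Type*} (G : SimpleGraph V) (L : List V) :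
    ∀ p : V, ∃ (l : List V) (LL : List (List V)),
    (∀ m ∈ (p :: l) :: LL, m ≠ [] ∧ m.IsChain G.Adj) ∧ ((p :: l) :: LL).flatten = p :: L ∧
    LL.length ≤ br G (p :: L) := by
  induction L with
  | nil => intro p; exact ⟨[], [], by simp, by simp, by simp⟩
  | cons q L ih =>
    intro p
    obtain ⟨l, LL, h1, h2, h3⟩ := ih q
    by_cases h : G.Adj p q
    · refine ⟨q :: l, LL, ?_, ?_, ?_⟩
      · intro m hm
        rcases List.mem_cons.1 hm with rfl | hm
        · refine ⟨by simp, ?_⟩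
          rw [List.isChain_cons_cons]
          exact ⟨h, (h1 _ (by simp)).2⟩
        · exact h1 m (by simp [hm])
      · simpa using h2
      · simp only [br]; omega
    · refine ⟨[], (q :: l) :: LL, ?_, ?_, ?_⟩
      · intro m hm
        rcases List.mem_cons.1 hm with rfl | hm
        · simp
        · exact h1 m hm
      · rw [List.flatten_cons, h2]; rfl
      · simp only [br, List.length_cons, c, if_neg h]; omega

lemma good_of_cov {V : Type*} [Nonempty V] (G : SimpleGraph V) (s : ℕ)
    (h : SPathCoverable s G) : Good s G := by
  obtain ⟨m, hm, a, b, p, h1, h2, h3⟩ := h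
  have hmpos : 0 < m := by
    obtain ⟨i, _⟩ := h3 (Classical.arbitrary V)
    exact i.pos
  refine ⟨(List.ofFn fun i => (p i).support).flatten, ?_, ?_, ?_⟩
  · rw [List.nodup_flatten, List.pairwise_ofFn]
    refine ⟨?_, ?_⟩
    · intro l hl
      rw [List.mem_ofFn] at hl
      obtain ⟨i, rfl⟩ := hl
      exact (h1 i).support_nodup
    · intro i j hij x hx hy
      exact h2 i j hij.ne x hx hy
  · intro x
    obtain ⟨i, hi⟩ := h3 x
    rw [List.mem_flatten]
    exact ⟨_, (List.mem_ofFn).2 ⟨i, rfl⟩, hi⟩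
  · have := br_flatten G (List.ofFn fun i => (p i).support) (by
      intro l hl
      rw [List.mem_ofFn] at hl
      obtain ⟨i, rfl⟩ := hl
      exact ⟨(p i).support_ne_nil, (p i).isChain_adj_support⟩)
    rw [List.length_ofFn] at this
    omega

lemma cov_of_good {V : Type*} [Nonempty V] (G : SimpleGraph V) (s : ℕ)
    (h : Good s G) : SPathCoverable s G := by
  obtain ⟨L, hn, hL, hb⟩ := h
  obtain ⟨LL, h1, h2, h3⟩ : ∃ LL : List (List V), (∀ m ∈ LL, m ≠ [] ∧ m.IsChain G.Adj) ∧
      LL.flatten = L ∧ LL.length ≤ s := by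
    cases L with
    | nil => exact absurd (hL (Classical.arbitrary V)) (by simp)
    | cons q L =>
      obtain ⟨l, LL, h1, h2, h3⟩ := exists_split G L q
      exact ⟨_, h1, h2, by simp only [List.length_cons]; omega⟩
  subst h2
  rw [List.nodup_flatten] at hn
  have hne : ∀ i : Fin LL.length, LL.get i ≠ [] := fun i => (h1 _ (List.get_mem LL i)).1
  have hch : ∀ i : Fin LL.length, (LL.get i).IsChain G.Adj :=
    fun i => (h1 _ (List.get_mem LL i)).2
  refine ⟨LL.length, h3, fun i => (LL.get i).head (hne i), fun i => (LL.get i).getLast (hne i),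
    fun i => SimpleGraph.Walk.ofSupport _ (hne i) (hch i), ?_, ?_, ?_⟩
  · intro i
    rw [SimpleGraph.Walk.isPath_def, SimpleGraph.Walk.support_ofSupport]
    exact hn.1 _ (List.get_mem LL i)
  · intro i j hij x
    rw [SimpleGraph.Walk.support_ofSupport, SimpleGraph.Walk.support_ofSupport]
    intro hx hy
    have hp := List.pairwise_iff_get.1 hn.2
    rcases lt_or_gt_of_ne hij with h | h
    · exact hp i j h hx hy
    · exact hp j i h hy hx
  · intro x
    obtain ⟨l, hl, hx⟩ := List.mem_flatten.1 (hL x)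
    obtain ⟨i, rfl⟩ := List.mem_iff_get.1 hl
    exact ⟨i, by rw [SimpleGraph.Walk.support_ofSupport]; exact hx⟩

lemma cov_mono {V : Type*} (G H : SimpleGraph V) (s : ℕ) (hle : G ≤ H)
    (h : SPathCoverable s G) : SPathCoverable s H := by
  obtain ⟨m, hm, a, b, p, h1, h2, h3⟩ := h
  refine ⟨m, hm, a, b, fun i => (p i).mapLe hle, ?_, ?_, ?_⟩
  · intro i; exact (h1 i).mapLe hle
  · intro i j hij x
    simpa using h2 i j hij x
  · intro x
    simpa using h3 x

lemma cov_step {V : Type*} [Fintype V] (G H : SimpleGraph V) (s : ℕ)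
    (hst : ClosureStep (Fintype.card V - s) G H) : SPathCoverable s G ↔ SPathCoverable s H := by
  constructor
  · apply cov_mono
    obtain ⟨u, v, -, -, -, rfl⟩ := hst
    exact le_sup_left
  · intro h
    have : Nonempty V := ⟨hst.choose⟩
    exact cov_of_good G s (good_step G H s hst (good_of_cov H s h))

end PathCov

/-- `G` is `s`-path-coverable iff its `(n-s)`-closure is `s`-path-coverable. -/
theorem stmt_5 {V : Type*} [Fintype V] (n s : ℕ) (G H : SimpleGraph V)
    (hcard : Fintype.card V = n) (hH : IsKClosure (n - s) G H) :
    SPathCoverable s G ↔ SPathCoverable s H := by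
  subst hcard
  obtain ⟨h, -⟩ := hH
  induction h with
  | refl => exact Iff.rfl
  | tail _ hst ih => exact ih.trans (PathCov.cov_step _ _ s hst)
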